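/- Let m, n ≥ 1 and k ≥ 2 be integers and set r = G(k,n,m). Then r is even if and only if 3 ∣ n or 4 ∣ n. -/

import Mathlib

/-- `G n m k` is the sequence from the paper: `G(1,n,m) = F_n^m`,
`G(k+1,n,m) = F_{n·G(k,n,m)}`. The value at `k = 0` is junk. -/
def G (n m : ℕ) : ℕ → ℕ
  | 0 => 1
  | 1 => Nat.fib n ^ m
  | (k+2) => Nat.fib (n * G n m (k+1))

/-!
Since `2 = F_3` and `3 = F_4`, we have `2 ∣ F_j ↔ 3 ∣ j` and `3 ∣ F_j ↔ 4 ∣ j`.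

If `4 ∣ n`, every term is divisible by `3`, so the index `n * G(k-1,n,m)` of the `k`-th term is
too, and that term is even; if `3 ∣ n`, this index is divisible by `3` outright. Conversely,
parity alone does not propagate along the recursion, but coprimality to `6` does: multiplying the
index `n` by a number coprime to `6` creates neither a factor `3` nor a factor `4`.
-/

theorem fib_dvd_fib_iff {m n : ℕ} (hm : m ≠ 2) : Nat.fib m ∣ Nat.fib n ↔ m ∣ n := by
  refine ⟨fun h ↦ ?_, Nat.fib_dvd m n⟩
  obtain rfl | rfl | hm : m = 0 ∨ m = 1 ∨ 3 ≤ m := by lia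
  · simpa using h
  · exact one_dvd n
  have fib_gcd_eq : Nat.fib (m.gcd n) = Nat.fib m := by rw [Nat.fib_gcd, Nat.gcd_eq_left h]
  have fib_lt_of_lt {d : ℕ} (hd : d < m) : Nat.fib d < Nat.fib m := calc
    Nat.fib d ≤ Nat.fib (m - 1) := Nat.fib_mono (by lia)
    _ < Nat.fib m := (Nat.fib_lt_fib (by lia)).2 (by lia)
  have gcd_ge : m ≤ m.gcd n := not_lt.1 fun hlt ↦ (fib_lt_of_lt hlt).ne fib_gcd_eq
  exact Nat.gcd_eq_left_iff_dvd.1 ((Nat.gcd_le_left n (by lia)).antisymm gcd_ge)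

theorem two_dvd_fib_iff {n : ℕ} : 2 ∣ Nat.fib n ↔ 3 ∣ n :=
  fib_dvd_fib_iff (m := 3) (by decide)

theorem three_dvd_fib_iff {n : ℕ} : 3 ∣ Nat.fib n ↔ 4 ∣ n :=
  fib_dvd_fib_iff (m := 4) (by decide)

theorem coprime_six_iff {n : ℕ} : Nat.Coprime 6 n ↔ ¬ 2 ∣ n ∧ ¬ 3 ∣ n := by
  rw [show 6 = 2 * 3 from rfl, Nat.coprime_mul_iff_left, Nat.prime_two.coprime_iff_not_dvd,
    Nat.prime_three.coprime_iff_not_dvd]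

theorem coprime_six_fib_iff {n : ℕ} : Nat.Coprime 6 (Nat.fib n) ↔ ¬ 3 ∣ n ∧ ¬ 4 ∣ n := by
  rw [coprime_six_iff, two_dvd_fib_iff, three_dvd_fib_iff]

theorem coprime_six_fib_mul_iff {n r : ℕ} (hr : Nat.Coprime 6 r) :
    Nat.Coprime 6 (Nat.fib (n * r)) ↔ Nat.Coprime 6 (Nat.fib n) := by
  have three_coprime : Nat.Coprime 3 r := hr.coprime_dvd_left (by decide)
  have four_coprime : Nat.Coprime 4 r := (hr.coprime_dvd_left (by decide : 2 ∣ 6)).pow_left 2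
  rw [coprime_six_fib_iff, coprime_six_fib_iff, three_coprime.dvd_mul_right,
    four_coprime.dvd_mul_right]

theorem coprime_six_G {n : ℕ} (hn : Nat.Coprime 6 (Nat.fib n)) (m : ℕ) :
    ∀ k, Nat.Coprime 6 (G n m k)
  | 0 => Nat.coprime_one_right 6
  | 1 => hn.pow_right m
  | k + 2 => (coprime_six_fib_mul_iff (coprime_six_G hn m (k + 1))).2 hn

theorem three_dvd_G_succ {m n : ℕ} (hm : m ≠ 0) (hn : 4 ∣ n) : ∀ k, 3 ∣ G n m (k + 1)
  | 0 => dvd_pow (three_dvd_fib_iff.2 hn) hm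
  | _ + 1 => three_dvd_fib_iff.2 (hn.mul_right _)

theorem stmt_14 (m n k : ℕ) (hm : 1 ≤ m) (hn : 1 ≤ n) (hk : 2 ≤ k) :
    Even (G n m k) ↔ (3 ∣ n ∨ 4 ∣ n) := by
  rw [even_iff_two_dvd]
  constructor
  · contrapose!
    intro hndvd
    exact (coprime_six_iff.1 (coprime_six_G (coprime_six_fib_iff.2 hndvd) m k)).1
  · obtain ⟨k, rfl⟩ := Nat.exists_eq_add_of_le' hk
    rw [G, two_dvd_fib_iff]
    rintro (three_dvd | four_dvd)
    · exact three_dvd.mul_right _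
    · exact (three_dvd_G_succ (Nat.one_le_iff_ne_zero.1 hm) four_dvd k).mul_left n
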